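/- Let n = 2m ≥ 2, let 1 ≤ h ≤ 2m, and let 1 ≤ r ≤ p−1. Then in the Hamiltonian algebra H(n): (ad x_{h'}^2 x_h)^r (x_{h'}) = σ(h')^r·(−1)^r·r!·x_{h'}^{r+1} and (ad x_{h'}^2 x_h)^r (x_h) = σ(h')^r·(Π_{u=0}^{r−1} (2−u))·x_{h'}^r·x_h. In particular, (ad x_{h'}^2 x_h)^{p−1}(x_{h'}) = 0 and (ad x_{h'}^2 x_h)^{p−1}(x_h) = 0. -/

import Mathlib

/-!
Write `k = h'` and `z = x_k² x_h`. Only `D_k z = 2 x_k x_h` and `D_h z = x_k²` are nonzero, and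
`σ(h) = -σ(k)`, so `D_H(z) = σ(k) (2 x_k x_h D_h - x_k² D_k)`. This operator sends
`x_k^a x_h^b` to `σ(k) (2b - a) x_k^{a+1} x_h^b`, which has no constant term
(`Hbr_xpow_pair`). Iterating multiplies the scalars `2b - a - u` for `u < r`
(`Hbr_iterate_pair`); the two formulas are the cases `(a, b) = (1, 0)` and `(0, 1)`.
For `r = p - 1` the first vanishes because `x_k^p = 0`, and the second because the product
contains the factor `u = 2`, as `p ≥ 5`.
-/

set_option maxHeartbeats 1000000
set_option synthInstance.maxHeartbeats 400000

open scoped BigOperators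
noncomputable section

variable (F : Type*) [Field F] (p n : ℕ)

/-- The ideal `(X_1^p, …, X_n^p)` of the polynomial ring. -/
def truncIdeal : Ideal (MvPolynomial (Fin n) F) :=
  Ideal.span (Set.range fun i : Fin n => MvPolynomial.X i ^ p)

/-- The truncated polynomial algebra `A(n) = F[x_1,…,x_n]/(x_1^p,…,x_n^p)`. -/
abbrev TruncP := MvPolynomial (Fin n) F ⧸ truncIdeal F p n

/-- The monomial `x^a` in `A(n)`. -/
def xpow (a : Fin n → ℕ) : TruncP F p n :=
  Ideal.Quotient.mk _ (MvPolynomial.monomial (Finsupp.equivFunOnFinite.symm a) 1)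

/-- Lift an `F`-linear map killing the truncation ideal to the quotient. -/
def liftF {N : Type*} [AddCommGroup N] [Module F N]
    (f : MvPolynomial (Fin n) F →ₗ[F] N)
    (h : (truncIdeal F p n).restrictScalars F ≤ LinearMap.ker f) :
    TruncP F p n →ₗ[F] N :=
  (Submodule.liftQ ((truncIdeal F p n).restrictScalars F) f h) ∘ₗ
    (Submodule.Quotient.restrictScalarsEquiv F (truncIdeal F p n)).symm.toLinearMap

lemma liftF_mk {N : Type*} [AddCommGroup N] [Module F N]
    (f : MvPolynomial (Fin n) F →ₗ[F] N)
    (h : (truncIdeal F p n).restrictScalars F ≤ LinearMap.ker f)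
    (x : MvPolynomial (Fin n) F) :
    liftF F p n f h (Ideal.Quotient.mk _ x) = f x := by
  simp only [liftF, LinearMap.coe_comp, Function.comp_apply, LinearEquiv.coe_coe]
  have : (Ideal.Quotient.mk (truncIdeal F p n)) x = Submodule.Quotient.mk x := rfl
  rw [this, Submodule.Quotient.restrictScalarsEquiv_symm_mk, Submodule.liftQ_apply]

lemma truncIdeal_pderiv_mem [CharP F p] (j : Fin n) {f : MvPolynomial (Fin n) F}
    (hf : f ∈ truncIdeal F p n) :
    Ideal.Quotient.mk (truncIdeal F p n) (MvPolynomial.pderiv j f) = 0 := by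
  classical
  let K : Ideal (MvPolynomial (Fin n) F) :=
    { carrier := {g | Ideal.Quotient.mk (truncIdeal F p n) (MvPolynomial.pderiv j g) = 0 ∧
        Ideal.Quotient.mk (truncIdeal F p n) g = 0},
      add_mem' := by
        rintro a b ⟨ha1, ha2⟩ ⟨hb1, hb2⟩
        refine ⟨?_, ?_⟩
        · rw [map_add, map_add, ha1, hb1, add_zero]
        · rw [map_add, ha2, hb2, add_zero]
      zero_mem' := ⟨by rw [map_zero, map_zero], by rw [map_zero]⟩
      smul_mem' := by
        rintro c x ⟨hx1, hx2⟩
        refine ⟨?_, ?_⟩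
        · have hL : MvPolynomial.pderiv j (c * x)
              = c * MvPolynomial.pderiv j x + x * MvPolynomial.pderiv j c := by
            have := (MvPolynomial.pderiv j).leibniz c x
            simpa [smul_eq_mul, mul_comm] using this
          rw [smul_eq_mul, hL]
          rw [map_add, map_mul, map_mul, hx1, hx2, mul_zero, zero_mul, add_zero]
        · rw [smul_eq_mul, map_mul, hx2, mul_zero] }
  have hle : truncIdeal F p n ≤ K := by
    rw [truncIdeal, Ideal.span_le]
    rintro _ ⟨i, rfl⟩
    refine ⟨?_, ?_⟩
    · have hgen : MvPolynomial.pderiv j (MvPolynomial.X (R := F) i ^ p) = 0 := by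
        rw [MvPolynomial.X_pow_eq_monomial, MvPolynomial.pderiv_monomial]
        rcases eq_or_ne i j with h | h
        · subst h
          simp [Finsupp.single_apply, CharP.cast_eq_zero F p]
        · simp [Finsupp.single_apply, h]
      rw [hgen, map_zero]
    · exact Ideal.Quotient.eq_zero_iff_mem.mpr (Ideal.subset_span ⟨i, rfl⟩)
  exact (hle hf).1

lemma truncIdeal_support {f : MvPolynomial (Fin n) F} (hf : f ∈ truncIdeal F p n) :
    ∀ d ∈ f.support, ∃ i, p ≤ d i := by
  classical
  let K : Ideal (MvPolynomial (Fin n) F) :=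
    { carrier := {g | ∀ d ∈ g.support, ∃ i, p ≤ d i},
      add_mem' := by
        intro a b ha hb d hd
        rcases Finset.mem_union.mp (MvPolynomial.support_add hd) with h | h
        · exact ha d h
        · exact hb d h
      zero_mem' := by simp
      smul_mem' := by
        intro c x hx d hd
        rw [smul_eq_mul] at hd
        obtain ⟨d1, hd1, d2, hd2, rfl⟩ := Finset.mem_add.mp (MvPolynomial.support_mul c x hd)
        obtain ⟨i, hi⟩ := hx d2 hd2
        exact ⟨i, le_trans hi (by simp)⟩ }
  have hle : truncIdeal F p n ≤ K := by
    rw [truncIdeal, Ideal.span_le]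
    rintro _ ⟨i, rfl⟩ d hd
    simp only [MvPolynomial.X_pow_eq_monomial] at hd
    rw [MvPolynomial.support_monomial] at hd
    simp only [one_ne_zero, if_false] at hd
    rcases Finset.mem_singleton.mp hd with rfl
    exact ⟨i, by simp⟩
  exact hle hf

/-- The coefficient of `x^a` (for `a` componentwise `< p`) of an element of `A(n)`,
as a linear functional. For `a` not in the box this is defined to be `0`. -/
def coeffT (a : Fin n → ℕ) : TruncP F p n →ₗ[F] F :=
  if h : ∀ i, a i < p then
    liftF F p n
      { toFun := fun f => f.coeff (Finsupp.equivFunOnFinite.symm a),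
        map_add' := fun f g => MvPolynomial.coeff_add _ f g,
        map_smul' := fun c f => MvPolynomial.coeff_smul _ c f }
      (by
        intro f hf
        have hf' : f ∈ truncIdeal F p n := hf
        simp only [LinearMap.mem_ker, LinearMap.coe_mk, AddHom.coe_mk]
        by_contra hne
        have hmem : Finsupp.equivFunOnFinite.symm a ∈ f.support :=
          MvPolynomial.mem_support_iff.mpr hne
        obtain ⟨i, hi⟩ := truncIdeal_support F p n hf' _ hmem
        have heq : (Finsupp.equivFunOnFinite.symm a) i = a i := rfl
        have h2 := h i
        rw [heq] at hi
        omega)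
  else 0

/-- The Jacobson–Witt algebra `W(n) = Der_F A(n)`. -/
abbrev Witt := Derivation F (TruncP F p n) (TruncP F p n)

def DjL [CharP F p] (j : Fin n) : TruncP F p n →ₗ[F] TruncP F p n :=
  liftF F p n
    ((Ideal.Quotient.mkₐ F (truncIdeal F p n)).toLinearMap ∘ₗ (MvPolynomial.pderiv j).toLinearMap)
    (by
      intro f hf
      have hf' : f ∈ truncIdeal F p n := hf
      simp only [LinearMap.mem_ker, LinearMap.coe_comp, Function.comp_apply,
        AlgHom.toLinearMap_apply, Ideal.Quotient.mkₐ_eq_mk, Derivation.coeFn_coe]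
      exact truncIdeal_pderiv_mem F p n j hf')

lemma DjL_mk [CharP F p] (j : Fin n) (f : MvPolynomial (Fin n) F) :
    DjL F p n j (Ideal.Quotient.mk _ f) = Ideal.Quotient.mk _ (MvPolynomial.pderiv j f) := by
  rw [DjL, liftF_mk]
  simp

/-- The partial derivative `D_j = ∂/∂x_j`, as a derivation of `A(n)`. -/
def Dj [CharP F p] (j : Fin n) : Witt F p n where
  toLinearMap := DjL F p n j
  map_one_eq_zero' := by
    have h1 : (1 : TruncP F p n) = Ideal.Quotient.mk _ (1 : MvPolynomial (Fin n) F) :=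
      (map_one _).symm
    rw [LinearMap.coe_mk] at *
    show DjL F p n j 1 = 0
    rw [h1, DjL_mk]
    simp
  leibniz' := by
    intro a b
    obtain ⟨x, rfl⟩ := Ideal.Quotient.mk_surjective a
    obtain ⟨y, rfl⟩ := Ideal.Quotient.mk_surjective b
    show DjL F p n j _ = _ • DjL F p n j _ + _ • DjL F p n j _
    rw [← map_mul, DjL_mk, DjL_mk, DjL_mk, smul_eq_mul, smul_eq_mul, ← map_mul, ← map_mul,
      ← map_add]
    congr 1
    have := (MvPolynomial.pderiv j).leibniz x y
    simpa [smul_eq_mul] using this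
section Cochains

variable (F : Type*) [Field F] {L : Type*} [AddCommGroup L] [Module F L]

/-- A map of two arguments which is `F`-linear in each argument. -/
def IsBilinear (ψ : L → L → L) : Prop :=
  (∀ x, IsLinearMap F (ψ x)) ∧ ∀ y, IsLinearMap F fun x => ψ x y

/-- A 2-cochain with adjoint coefficients: an alternating `F`-bilinear map. -/
def IsCochain (ψ : L → L → L) : Prop :=
  IsBilinear F ψ ∧ ∀ x, ψ x x = 0

/-- A 2-cocycle with adjoint coefficients, for the bracket `B`. -/
def IsCocycle (B : L → L → L) (ψ : L → L → L) : Prop :=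
  IsCochain F ψ ∧ ∀ x y z,
    B x (ψ y z) - B y (ψ x z) + B z (ψ x y)
      - ψ (B x y) z + ψ (B x z) y - ψ (B y z) x = 0

/-- A 2-coboundary with adjoint coefficients, for the bracket `B`. -/
def IsCoboundary (B : L → L → L) (ψ : L → L → L) : Prop :=
  ∃ φ : L →ₗ[F] L, ∀ x y, ψ x y = B x (φ y) - B y (φ x) - φ (B x y)

/-- A 2-cocycle of a subspace `V` (closed under the bracket `B` of the ambient space),
with adjoint coefficients.  The cochain is recorded as an everywhere-defined bilinear
map preserving `V`; only its restriction to `V` is relevant. -/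
def IsCocycleOn (V : Submodule F L) (B : L → L → L) (ψ : L → L → L) : Prop :=
  IsBilinear F ψ ∧ (∀ x ∈ V, ∀ y ∈ V, ψ x y ∈ V) ∧ (∀ x ∈ V, ψ x x = 0) ∧
    ∀ x ∈ V, ∀ y ∈ V, ∀ z ∈ V,
      B x (ψ y z) - B y (ψ x z) + B z (ψ x y)
        - ψ (B x y) z + ψ (B x z) y - ψ (B y z) x = 0

/-- A 2-coboundary of a subspace `V`, with adjoint coefficients. -/
def IsCoboundaryOn (V : Submodule F L) (B : L → L → L) (ψ : L → L → L) : Prop :=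
  ∃ φ : L →ₗ[F] L, (∀ x ∈ V, φ x ∈ V) ∧
    ∀ x ∈ V, ∀ y ∈ V, ψ x y = B x (φ y) - B y (φ x) - φ (B x y)

/-- A derivation of a subspace `V` closed under the bracket `B`:
an `F`-linear map preserving `V` and satisfying the Leibniz rule on `V`. -/
def IsDerivationOn (V : Submodule F L) (B : L → L → L) (γ : L →ₗ[F] L) : Prop :=
  (∀ x ∈ V, γ x ∈ V) ∧ ∀ x ∈ V, ∀ y ∈ V, γ (B x y) = B (γ x) y + B x (γ y)

/-- An inner derivation of a subspace `V`: a map agreeing on `V` with `ad z = B z ·`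
for some `z ∈ V`. -/
def IsInnerOn (V : Submodule F L) (B : L → L → L) (δ : L → L) : Prop :=
  ∃ z ∈ V, ∀ y ∈ V, δ y = B z y

/-- An inner derivation: `δ = ad z = B z ·` for some `z`. -/
def IsInner (B : L → L → L) (δ : L → L) : Prop := ∃ z, ∀ y, δ y = B z y

/-- The squaring `Sq(γ)(x,y) = ∑_{i=1}^{p-1} [γ^i(x), γ^{p-i}(y)]/(i!·(p-i)!)`
of an operator `γ`, relative to the bracket `B`. -/
def Squaring (p : ℕ) (B : L → L → L) (γ : L → L) : L → L → L := fun x y =>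
  ∑ i ∈ Finset.Ioo 0 p,
    (((Nat.factorial i * Nat.factorial (p - i) : ℕ) : F))⁻¹ • B (γ^[i] x) (γ^[p - i] y)

/-- `Sq(z) := Sq(ad z)` for an element `z`. -/
def SqE (p : ℕ) (B : L → L → L) (z : L) : L → L → L :=
  Squaring F p B (fun y => B z y)

/-- The Hochschild operator
`H_ψ(x)(y) = ∑_{j=0}^{p-1} (ad x)^j (ψ(x, (ad x)^{p-1-j}(y))) − ψ(x^{[p]}, y)`,
for the bracket `B`, the 2-cochain `ψ`, and the chosen `p`-th power `xp` of `x`. -/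
def HOp (p : ℕ) (B : L → L → L) (ψ : L → L → L) (x xp : L) : L → L := fun y =>
  (∑ j ∈ Finset.range p, (fun z => B x z)^[j] (ψ x ((fun z => B x z)^[p - 1 - j] y)))
    - ψ xp y

end Cochains

section Symplectic

variable (F : Type*) [Field F] (m : ℕ)

/-- The sign `σ(j)` for `1 ≤ j ≤ 2m`: `1` if `j ≤ m` and `−1` if `j > m`. -/
def sg (j : Fin (2 * m)) : F := if (j : ℕ) < m then 1 else -1

/-- The conjugate index `j' = j ± m`. -/
def cj (j : Fin (2 * m)) : Fin (2 * m) :=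
  if h : (j : ℕ) < m then ⟨(j : ℕ) + m, by omega⟩
  else ⟨(j : ℕ) - m, by have := j.isLt; omega⟩

end Symplectic

section Hamiltonian

variable (F : Type*) [Field F] (p m : ℕ) [CharP F p]

/-- The Poisson operator `D_H(f)(g) = ∑_{j=1}^{2m} σ(j)·D_j(f)·D_{j'}(g)` on `A(2m)`. -/
def DHH (f g : TruncP F p (2 * m)) : TruncP F p (2 * m) :=
  ∑ j : Fin (2 * m), sg F m j • (Dj F p (2 * m) j f * Dj F p (2 * m) (cj m j) g)

/-- The bracket of the Hamiltonian algebra: the Poisson bracket `D_H(f)(g)` with its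
constant term removed (realizing the quotient by the central element `1` on the span
of the non-constant monomials). -/
def Hbr (f g : TruncP F p (2 * m)) : TruncP F p (2 * m) :=
  DHH F p m f g - coeffT F p (2 * m) (fun _ => 0) (DHH F p m f g) • (1 : TruncP F p (2 * m))

/-- The Hamiltonian algebra `H(n)`, `n = 2m`: the span of the monomials `x^a` with
`x^a ≠ 1, x^τ`. -/
def Hsub : Submodule F (TruncP F p (2 * m)) :=
  Submodule.span F
    {f | ∃ a : Fin (2 * m) → ℕ,
      (∀ i, a i < p) ∧ a ≠ (fun _ => 0) ∧ a ≠ (fun _ => p - 1) ∧ f = xpow F p (2 * m) a}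

open scoped Classical in
/-- The `[p]`-th power of the monomial `x^a` in `H(n)`: `x^a` itself if
`x^a = x_i x_{i'}` for some `1 ≤ i ≤ m`, and `0` otherwise. -/
noncomputable def HpPow (a : Fin (2 * m) → ℕ) : TruncP F p (2 * m) :=
  if ∃ i : Fin (2 * m), (i : ℕ) < m ∧ a = Pi.single i 1 + Pi.single (cj m i) 1
  then xpow F p (2 * m) a else 0

/-- The characterization of the cocycle `Φ` of `H(n)`: the alternating bilinear map
with `Φ(x^a, x^b) = ∑_{|δ|=3, δ≤a, δ̂≤b} binom(a,δ)·binom(b,δ̂)·σ(δ)·δ!·x^{a+b−δ−δ̂}`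
on monomials. -/
def IsPhiH (Φ : TruncP F p (2 * m) → TruncP F p (2 * m) → TruncP F p (2 * m)) : Prop :=
  IsBilinear F Φ ∧ (∀ x, Φ x x = 0) ∧
    ∀ a b : Fin (2 * m) → ℕ, (∀ i, a i < p) → (∀ i, b i < p) →
      Φ (xpow F p (2 * m) a) (xpow F p (2 * m) b) =
        ∑ d : Fin (2 * m) → Fin 4,
          if (∑ i, (d i : ℕ)) = 3 ∧ (∀ i, (d i : ℕ) ≤ a i) ∧ (∀ i, (d (cj m i) : ℕ) ≤ b i)
          then ((∏ i, (((a i).choose (d i) : ℕ) : F)) *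
                (∏ i, (((b i).choose (d (cj m i)) : ℕ) : F)) *
                (∏ i, sg F m i ^ (d i : ℕ)) *
                (∏ i, (((d i : ℕ).factorial : ℕ) : F))) •
              xpow F p (2 * m)
                (a + b - (fun i => (d i : ℕ)) - (fun i => (d (cj m i) : ℕ)))
          else 0

end Hamiltonian

lemma cj_cj (m : ℕ) (j : Fin (2 * m)) : cj m (cj m j) = j := by
  have := j.isLt
  ext
  by_cases hj : (j : ℕ) < m
  · simp [cj, hj]
  · have : (j : ℕ) - m < m := by omega
    simp [cj, hj, this]
    omega

lemma cj_ne (m : ℕ) (j : Fin (2 * m)) : cj m j ≠ j := by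
  have := j.isLt
  unfold cj
  intro e
  have := congrArg Fin.val e
  split_ifs at this <;> simp at this <;> omega

lemma sg_cj (F : Type*) [Field F] (m : ℕ) (j : Fin (2 * m)) : sg F m (cj m j) = -sg F m j := by
  have := j.isLt
  unfold sg cj
  split_ifs <;> simp_all <;> omega

/-- The generator `x_i` of the truncated polynomial algebra. -/
def xgen (F : Type*) [Field F] (p n : ℕ) (i : Fin n) : TruncP F p n :=
  Ideal.Quotient.mk _ (MvPolynomial.X i)

lemma xpow_pair (F : Type*) [Field F] (p n : ℕ) (i j : Fin n) (a b : ℕ) :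
    xpow F p n (Pi.single i a + Pi.single j b) = xgen F p n i ^ a * xgen F p n j ^ b := by
  have e : Finsupp.equivFunOnFinite.symm (Pi.single i a + Pi.single j b)
      = Finsupp.single i a + Finsupp.single j b := by
    ext t
    simp [Finsupp.single_eq_pi_single]
  rw [xpow, e, xgen, xgen, ← map_pow, ← map_pow, ← map_mul, MvPolynomial.X_pow_eq_monomial,
    MvPolynomial.X_pow_eq_monomial, MvPolynomial.monomial_mul, one_mul]

lemma Dj_xgen (F : Type*) [Field F] (p n : ℕ) [CharP F p] (i j : Fin n) :
    Dj F p n j (xgen F p n i) = if i = j then 1 else 0 := by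
  classical
  have e : Dj F p n j (xgen F p n i)
      = Ideal.Quotient.mk (truncIdeal F p n) (MvPolynomial.pderiv j (MvPolynomial.X i)) :=
    DjL_mk F p n j _
  rw [e, MvPolynomial.pderiv_X]
  by_cases hij : i = j
  · subst hij; simp
  · simp [hij]

lemma coeffT_zero_xpow (F : Type*) [Field F] (p n : ℕ) (a : Fin n → ℕ) (ha : a ≠ 0) :
    coeffT F p n (fun _ => 0) (xpow F p n a) = 0 := by
  classical
  unfold coeffT
  split_ifs with hp
  · rw [xpow, liftF_mk]
    simp only [LinearMap.coe_mk, AddHom.coe_mk, MvPolynomial.coeff_monomial]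
    rw [if_neg]
    intro e
    exact ha (Finsupp.equivFunOnFinite.symm.injective e)
  · simp

/-- The bracket of `x_k² x_h` with `x_k^a x_h^b`, before removal of the constant term. -/
lemma DHH_xpow_pair (F : Type*) [Field F] (p m : ℕ) [CharP F p] (h : Fin (2 * m)) (a b : ℕ) :
    DHH F p m (xpow F p (2 * m) (Pi.single (cj m h) 2 + Pi.single h 1))
        (xpow F p (2 * m) (Pi.single (cj m h) a + Pi.single h b))
      = (sg F m (cj m h) * (2 * b - a)) •
          xpow F p (2 * m) (Pi.single (cj m h) (a + 1) + Pi.single h b) := by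
  have hk := cj_ne m h
  have hs : sg F m h = -sg F m (cj m h) := by rw [sg_cj, neg_neg]
  have key : ∀ (c : F) (x : TruncP F p (2 * m)), c • x = algebraMap F _ c * x :=
    fun c x => Algebra.smul_def c x
  simp only [xpow_pair]
  rw [DHH, Finset.sum_eq_add (cj m h) h hk, cj_cj, hs]
  · -- The powers `a - 1`, `b - 1` produced by differentiation truncate, so `a = 0` and `b = 0`
    -- are treated separately.
    rcases a with _ | a <;> rcases b with _ | b <;>
    simp [Derivation.leibniz, Derivation.leibniz_pow, Dj_xgen, hk, hk.symm] <;>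
    simp only [key, map_mul, map_sub, map_add, map_neg, map_natCast, map_ofNat, map_one] <;> ring
  · rintro c - ⟨hc1, hc2⟩
    simp [Derivation.leibniz, Derivation.leibniz_pow, Dj_xgen, hc1.symm, hc2.symm]
  · simp
  · simp

lemma Hbr_xpow_pair (F : Type*) [Field F] (p m : ℕ) [CharP F p] (h : Fin (2 * m)) (a b : ℕ) :
    Hbr F p m (xpow F p (2 * m) (Pi.single (cj m h) 2 + Pi.single h 1))
        (xpow F p (2 * m) (Pi.single (cj m h) a + Pi.single h b))
      = (sg F m (cj m h) * (2 * b - a)) •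
          xpow F p (2 * m) (Pi.single (cj m h) (a + 1) + Pi.single h b) := by
  rw [Hbr, DHH_xpow_pair, map_smul, coeffT_zero_xpow]
  · simp
  · intro e
    have := congrFun e (cj m h)
    simp at this

lemma Hbr_smul_right (F : Type*) [Field F] (p m : ℕ) [CharP F p] (f g : TruncP F p (2 * m))
    (c : F) : Hbr F p m f (c • g) = c • Hbr F p m f g := by
  have e : DHH F p m f (c • g) = c • DHH F p m f g := by
    simp only [DHH, Derivation.map_smul, Finset.smul_sum, mul_smul_comm]
    exact Finset.sum_congr rfl fun j _ => smul_comm _ _ _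
  rw [Hbr, Hbr, e, map_smul, smul_sub, smul_assoc]

lemma Hbr_iterate_pair (F : Type*) [Field F] (p m : ℕ) [CharP F p] (h : Fin (2 * m))
    (a b r : ℕ) :
    (fun y => Hbr F p m (xpow F p (2 * m) (Pi.single (cj m h) 2 + Pi.single h 1)) y)^[r]
        (xpow F p (2 * m) (Pi.single (cj m h) a + Pi.single h b))
      = (sg F m (cj m h) ^ r * ∏ u ∈ Finset.range r, ((2 * b - a : F) - u)) •
          xpow F p (2 * m) (Pi.single (cj m h) (a + r) + Pi.single h b) := by
  induction r with
  | zero => simp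
  | succ r ih =>
    rw [Function.iterate_succ_apply', ih, Hbr_smul_right, Hbr_xpow_pair, smul_smul,
      Finset.prod_range_succ, add_assoc]
    congr 1
    push_cast
    ring

lemma prod_neg_succ (F : Type*) [Field F] (r : ℕ) :
    ∏ u ∈ Finset.range r, ((2 * (0 : ℕ) - (1 : ℕ) : F) - u) = (-1) ^ r * (r.factorial : F) := by
  induction r with
  | zero => simp
  | succ r ih =>
    rw [Finset.prod_range_succ, ih, Nat.factorial_succ]
    push_cast
    ring

lemma xgen_pow_p (F : Type*) [Field F] (p n : ℕ) (i : Fin n) : xgen F p n i ^ p = 0 := by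
  rw [xgen, ← map_pow]
  exact Ideal.Quotient.eq_zero_iff_mem.mpr (Ideal.subset_span ⟨i, rfl⟩)

/-- In `H(n)`, `n = 2m ≥ 2`, for `1 ≤ r ≤ p−1`:
`(ad x_{h'}² x_h)^r (x_{h'}) = σ(h')^r·(−1)^r·r!·x_{h'}^{r+1}` and
`(ad x_{h'}² x_h)^r (x_h) = σ(h')^r·(∏_{u=0}^{r−1}(2−u))·x_{h'}^r x_h`;
in particular both vanish for `r = p−1`. -/
theorem hamiltonian_ad_iterate_formula
    (p m : ℕ) (hp : p.Prime) (hp5 : 5 ≤ p) (hm : 1 ≤ m)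
    (F : Type*) [Field F] [IsAlgClosed F] [CharP F p]
    (h : Fin (2 * m)) :
    (∀ r : ℕ, 1 ≤ r → r ≤ p - 1 →
      ((fun y => Hbr F p m
            (xpow F p (2 * m) (Pi.single (cj m h) 2 + Pi.single h 1)) y)^[r]
          (xpow F p (2 * m) (Pi.single (cj m h) 1))
        = (sg F m (cj m h) ^ r * (-1 : F) ^ r * (r.factorial : F)) •
            xpow F p (2 * m) (Pi.single (cj m h) (r + 1))
      ∧ (fun y => Hbr F p m
            (xpow F p (2 * m) (Pi.single (cj m h) 2 + Pi.single h 1)) y)^[r]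
          (xpow F p (2 * m) (Pi.single h 1))
        = (sg F m (cj m h) ^ r * ∏ u ∈ Finset.range r, ((2 : F) - (u : F))) •
            xpow F p (2 * m) (Pi.single (cj m h) r + Pi.single h 1)))
    ∧ (fun y => Hbr F p m
          (xpow F p (2 * m) (Pi.single (cj m h) 2 + Pi.single h 1)) y)^[p - 1]
        (xpow F p (2 * m) (Pi.single (cj m h) 1)) = 0
    ∧ (fun y => Hbr F p m
          (xpow F p (2 * m) (Pi.single (cj m h) 2 + Pi.single h 1)) y)^[p - 1]
        (xpow F p (2 * m) (Pi.single h 1)) = 0 := by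
  have main1 : ∀ r : ℕ,
      (fun y => Hbr F p m
            (xpow F p (2 * m) (Pi.single (cj m h) 2 + Pi.single h 1)) y)^[r]
          (xpow F p (2 * m) (Pi.single (cj m h) 1))
        = (sg F m (cj m h) ^ r * (-1 : F) ^ r * (r.factorial : F)) •
            xpow F p (2 * m) (Pi.single (cj m h) (r + 1)) := by
    intro r
    have e := Hbr_iterate_pair F p m h 1 0 r
    rw [prod_neg_succ, ← mul_assoc, add_comm 1 r] at e
    simpa only [Pi.single_zero, add_zero] using e
  have main2 : ∀ r : ℕ,
      (fun y => Hbr F p m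
            (xpow F p (2 * m) (Pi.single (cj m h) 2 + Pi.single h 1)) y)^[r]
          (xpow F p (2 * m) (Pi.single h 1))
        = (sg F m (cj m h) ^ r * ∏ u ∈ Finset.range r, ((2 : F) - (u : F))) •
            xpow F p (2 * m) (Pi.single (cj m h) r + Pi.single h 1) := by
    intro r
    have e := Hbr_iterate_pair F p m h 0 1 r
    simpa only [Pi.single_zero, zero_add, Nat.cast_one, Nat.cast_zero, mul_one, sub_zero] using e
  refine ⟨fun r _ _ => ⟨main1 r, main2 r⟩, ?_, ?_⟩
  · rw [main1, Nat.sub_add_cancel hp.one_le]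
    have e := xpow_pair F p (2 * m) (cj m h) h p 0
    rw [Pi.single_zero, add_zero, xgen_pow_p, zero_mul] at e
    rw [e, smul_zero]
  · rw [main2, Finset.prod_eq_zero (i := 2) (Finset.mem_range.mpr (by omega)) (by simp),
      mul_zero, zero_smul]
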